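/- Let φ be a state on 𝒫 and let (𝒫_k)_{k∈ℕ} be a family of submodules that are mutually φ-orthogonal and satisfy ⨆_{k≤n} 𝒫_k = 𝒫_{n]} for every n. If ξ ∈ 𝒫_{n+1} satisfies φ((star ξ)·X_j·q) = 0 for every j ∈ {1,…,d} and every q ∈ 𝒫_n, then ξ is a φ-null vector: φ((star ξ)·ξ) = 0. (Thus, up to null vectors, the images of 𝒫_n under the creation parts of the coordinates span 𝒫_{n+1}.) -/

import Mathlib

open MvPolynomial

/-- The `*`-operation on `MvPolynomial (Fin d) ℂ`: conjugation of coefficients. -/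
noncomputable def pstar {d : ℕ} (p : MvPolynomial (Fin d) ℂ) : MvPolynomial (Fin d) ℂ :=
  map (starRingEnd ℂ) p

/-!
Every monomial of degree `n + 1` is a coordinate times a monomial of degree `n`, so
`𝒫_{n+1]} = 𝒫_{n]} + ∑ j, X_j 𝒫_{n]}`. Writing `𝒫_{n]} = ∑ k ≤ n, 𝒫_k`, the summands `X_j 𝒫_k`
with `k < n` already lie in `𝒫_{n]}`, which leaves `𝒫_{n+1]} = 𝒫_{n]} + ∑ j, X_j 𝒫_n`. A vector
`ξ ∈ 𝒫_{n+1}` is orthogonal to `𝒫_{n]}`; if it is also orthogonal to every `X_j 𝒫_n`, it is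
orthogonal to all of `𝒫_{n+1]}`, hence to itself.
-/

section DegreeFiltration

variable {σ R : Type*} [CommSemiring R]

theorem restrictTotalDegree_mono : Monotone (restrictTotalDegree σ R) :=
  fun _ _ hmn => restrictSupport_mono R fun _ hs => le_trans hs hmn

theorem X_mul_mem_restrictTotalDegree_succ (j : σ) {n : ℕ} {p : MvPolynomial σ R}
    (hp : p ∈ restrictTotalDegree σ R n) : X j * p ∈ restrictTotalDegree σ R (n + 1) := by
  rw [mem_restrictTotalDegree] at hp ⊢
  have hX : (X j : MvPolynomial σ R).totalDegree ≤ 1 :=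
    (totalDegree_monomial_le (Finsupp.single j 1) (1 : R)).trans_eq (by simp)
  calc (X j * p).totalDegree ≤ (X j : MvPolynomial σ R).totalDegree + p.totalDegree :=
        totalDegree_mul _ _
    _ ≤ n + 1 := by omega

theorem monomial_mem_restrictTotalDegree {m : σ →₀ ℕ} {n : ℕ} (hm : m.degree ≤ n) (c : R) :
    monomial m c ∈ restrictTotalDegree σ R n :=
  (monomial_mem_restrictSupport R).2 (Or.inl hm)

theorem exists_eq_single_add_of_ne_zero {m : σ →₀ ℕ} (hm : m ≠ 0) :
    ∃ j m', m = Finsupp.single j 1 + m' := by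
  obtain ⟨j, hj⟩ := Finsupp.ne_iff.1 hm
  exact ⟨j, exists_add_of_le (Finsupp.single_le_iff.2 (Nat.one_le_iff_ne_zero.2 hj))⟩

theorem restrictTotalDegree_succ (n : ℕ) :
    restrictTotalDegree σ R (n + 1) = restrictTotalDegree σ R n ⊔
      ⨆ j, (restrictTotalDegree σ R n).map (LinearMap.mulLeft R (X j)) := by
  apply le_antisymm
  · rw [restrictTotalDegree, restrictSupport_eq_span, Submodule.span_le]
    rintro _ ⟨m, hm : m.degree ≤ n + 1, rfl⟩
    rcases le_or_gt m.degree n with hle | hlt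
    · exact Submodule.mem_sup_left (monomial_mem_restrictTotalDegree hle 1)
    · have hm0 : m ≠ 0 := fun h => by simp [h] at hlt
      obtain ⟨j, m', rfl⟩ := exists_eq_single_add_of_ne_zero hm0
      have hm' : m'.degree ≤ n := by
        rw [map_add, Finsupp.degree_single] at hm
        omega
      refine Submodule.mem_sup_right (Submodule.mem_iSup_of_mem j
        ⟨monomial m' 1, monomial_mem_restrictTotalDegree hm' 1, ?_⟩)
      simp only [LinearMap.mulLeft_apply, monomial_single_add, pow_one]
  · refine sup_le (restrictTotalDegree_mono n.le_succ) (iSup_le fun j => ?_)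
    exact Submodule.map_le_iff_le_comap.2 fun _ => X_mul_mem_restrictTotalDegree_succ j

variable {P : ℕ → Submodule R (MvPolynomial σ R)}

theorem le_restrictTotalDegree_of_iSup_eq
    (hfil : ∀ n, (⨆ k ≤ n, P k) = restrictTotalDegree σ R n) (n : ℕ) :
    P n ≤ restrictTotalDegree σ R n :=
  hfil n ▸ le_iSup₂_of_le n le_rfl le_rfl

theorem restrictTotalDegree_succ_of_iSup_eq
    (hfil : ∀ n, (⨆ k ≤ n, P k) = restrictTotalDegree σ R n) (n : ℕ) :
    restrictTotalDegree σ R (n + 1) = restrictTotalDegree σ R n ⊔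
      ⨆ j, (P n).map (LinearMap.mulLeft R (X j)) := by
  rw [restrictTotalDegree_succ]
  apply le_antisymm
  · have hXP : ∀ j, ∀ k ≤ n, (P k).map (LinearMap.mulLeft R (X j)) ≤
        restrictTotalDegree σ R n ⊔ ⨆ j, (P n).map (LinearMap.mulLeft R (X j)) := by
      intro j k hk
      rcases hk.lt_or_eq with hlt | rfl
      · refine le_sup_of_le_left (Submodule.map_le_iff_le_comap.2 fun q hq => ?_)
        have hq' := le_restrictTotalDegree_of_iSup_eq hfil k hq
        exact restrictTotalDegree_mono hlt (X_mul_mem_restrictTotalDegree_succ j hq')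
      · exact le_sup_of_le_right (le_iSup_of_le j le_rfl)
    refine sup_le le_sup_left (iSup_le fun j => ?_)
    nth_rw 1 [← hfil n]
    simp only [Submodule.map_iSup]
    exact iSup₂_le (hXP j)
  · exact sup_le_sup_left
      (iSup_mono fun _ => Submodule.map_mono (le_restrictTotalDegree_of_iSup_eq hfil n)) _

end DegreeFiltration

theorem stmt_11_general {σ R M : Type*} [CommSemiring R] [AddCommMonoid M] [Module R M]
    (conj : R →+* R) (φ : MvPolynomial σ R →ₗ[R] M)
    (P : ℕ → Submodule R (MvPolynomial σ R))
    (horth : ∀ l k, k < l → ∀ p ∈ P l, ∀ q ∈ P k, φ (map conj p * q) = 0)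
    (hfil : ∀ n, (⨆ k ≤ n, P k) = restrictTotalDegree σ R n)
    (n : ℕ) (ξ : MvPolynomial σ R) (hξ : ξ ∈ P (n + 1))
    (horthX : ∀ j, ∀ q ∈ P n, φ (map conj ξ * (X j * q)) = 0) :
    ∀ q ∈ restrictTotalDegree σ R (n + 1), φ (map conj ξ * q) = 0 := by
  let ξperp := LinearMap.ker (φ ∘ₗ LinearMap.mulLeft R (map conj ξ))
  have hlow : restrictTotalDegree σ R n ≤ ξperp := by
    rw [← hfil n]
    exact iSup₂_le fun k hk => horth (n + 1) k (Nat.lt_succ_of_le hk) ξ hξ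
  have hcreate : ⨆ j, (P n).map (LinearMap.mulLeft R (X j)) ≤ ξperp :=
    iSup_le fun j => Submodule.map_le_iff_le_comap.2 (horthX j)
  change restrictTotalDegree σ R (n + 1) ≤ ξperp
  rw [restrictTotalDegree_succ_of_iSup_eq hfil]
  exact sup_le hlow hcreate

/-- If `(𝒫_k)` is a mutually `φ`-orthogonal family with `⨆_{k ≤ n} 𝒫_k = 𝒫_{n]}` and
`ξ ∈ 𝒫_{n+1}` is `φ`-orthogonal to `X_j·𝒫_n` for every coordinate `j`, then `ξ` is a
`φ`-null vector: up to null vectors the creators applied to `𝒫_n` span `𝒫_{n+1}`. -/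
theorem stmt_11 (d : ℕ) (hd : 1 ≤ d)
    (φ : MvPolynomial (Fin d) ℂ →ₗ[ℂ] ℂ) (hφ1 : φ 1 = 1)
    (hφpos : ∀ p, ∃ r : ℝ, 0 ≤ r ∧ φ (pstar p * p) = (r : ℂ))
    (P : ℕ → Submodule ℂ (MvPolynomial (Fin d) ℂ))
    (horth : ∀ l k, l ≠ k → ∀ p ∈ P l, ∀ q ∈ P k, φ (pstar p * q) = 0)
    (hfil : ∀ n, (⨆ k ≤ n, P k) = restrictTotalDegree (Fin d) ℂ n)
    (n : ℕ) (ξ : MvPolynomial (Fin d) ℂ) (hξ : ξ ∈ P (n + 1))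
    (horthX : ∀ (j : Fin d), ∀ q ∈ P n, φ (pstar ξ * (X j * q)) = 0) :
    φ (pstar ξ * ξ) = 0 :=
  stmt_11_general (starRingEnd ℂ) φ P (fun l k hkl => horth l k hkl.ne') hfil n ξ hξ horthX ξ
    (le_restrictTotalDegree_of_iSup_eq hfil (n + 1) hξ)
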